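/- Derivative of the dual objective: fix ψ : Fin M → ℝ and i ∈ Fin M, let D_i = {v ∈ D : J v i − ψ i < J v j − ψ j for every j ≠ i}, and assume that the set of v ∈ D at which the minimum defining ψᶜ(v) is attained by more than one index has μ-measure zero. Then the real function t ↦ F(ψ + t • e_i), where e_i is the i-th standard basis vector, is differentiable at t = 0 with derivative ω i − (μ(D_i)).toReal. -/

import Mathlib

open MeasureTheory

/-!
If the minimum defining `ψᶜ(v)` is attained at a single index `k`, it is still attained only at `k`
after a small perturbation of `ψ`, so `ψᶜ(v)` coincides near `ψ` with the affine function
`J v k - ψ k` and has derivative `-(proj k)` there. As `ψ ↦ ψᶜ(v)` is `1`-Lipschitz for the sup norm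
and `μ` is finite, dominated convergence allows one to differentiate under the integral sign. The
dual objective thus has a Fréchet derivative, whose value at `e_i` is the partial derivative sought.
-/

open Filter Topology ContinuousLinearMap

section FiniteInfimum

variable {ι : Type*} [Finite ι]

theorem lipschitzWith_iInf [Nonempty ι] {E : Type*} [PseudoMetricSpace E] {f : ι → E → ℝ}
    {K : NNReal} (hf : ∀ i, LipschitzWith K (f i)) : LipschitzWith K (fun x ↦ ⨅ i, f i x) := by
  refine LipschitzWith.of_le_add_mul K fun x y ↦ ?_
  obtain ⟨k, hk⟩ := exists_eq_ciInf_of_finite (f := fun i ↦ f i y)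
  calc ⨅ i, f i x ≤ f k x := Finite.ciInf_le _ k
    _ ≤ f k y + K * dist x y := (hf k).le_add_mul x y
    _ = (⨅ i, f i y) + K * dist x y := by rw [hk]

theorem iInf_eventuallyEq_of_forall_lt {E α : Type*} [TopologicalSpace E]
    [ConditionallyCompleteLinearOrder α] [TopologicalSpace α] [OrderClosedTopology α]
    {f : ι → E → α} {x : E} {k : ι} (hf : ∀ i, ContinuousAt (f i) x)
    (hk : ∀ j, j ≠ k → f k x < f j x) :
    (fun y ↦ ⨅ i, f i y) =ᶠ[𝓝 x] f k := by
  have : Nonempty ι := ⟨k⟩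
  have k_least : ∀ᶠ y in 𝓝 x, ∀ j, f k y ≤ f j y := by
    refine eventually_all.2 fun j ↦ ?_
    obtain rfl | hj := eq_or_ne j k
    · exact Eventually.of_forall fun _ ↦ le_rfl
    · exact ((hf k).eventually_lt (hf j) (hk j hj)).mono fun _ ↦ le_of_lt
  exact k_least.mono fun y hy ↦ le_antisymm (Finite.ciInf_le _ k) (le_ciInf hy)

theorem integrable_iInf [Nonempty ι] {D : Type*} [MeasurableSpace D] {μ : Measure D}
    {f : ι → D → ℝ} (hf : ∀ i, Integrable (f i) μ) : Integrable (fun v ↦ ⨅ i, f i v) μ := by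
  have := Fintype.ofFinite ι
  refine (integrable_finsetSum Finset.univ fun i _ ↦ (hf i).norm).mono'
    (AEMeasurable.iInf fun i ↦ (hf i).aemeasurable).aestronglyMeasurable
    (Eventually.of_forall fun v ↦ ?_)
  obtain ⟨k, hk⟩ := exists_eq_ciInf_of_finite (f := fun i ↦ f i v)
  rw [← hk]
  exact Finset.single_le_sum (f := fun i ↦ ‖f i v‖) (fun _ _ ↦ norm_nonneg _) (Finset.mem_univ k)

end FiniteInfimum

section CTransform

variable {D ι : Type*}

/-- The `c`-transform `ψᶜ(v)` of `ψ` for the cost `J`. -/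
noncomputable def cTransform (J : D → ι → ℝ) (ψ : ι → ℝ) (v : D) : ℝ :=
  ⨅ i, (J v i - ψ i)

/-- The Laguerre cell `D_i` of the weights `ψ`: the points at which the minimum defining the
`c`-transform is attained at `i` only. -/
def laguerreCell (J : D → ι → ℝ) (ψ : ι → ℝ) (i : ι) : Set D :=
  {v | ∀ j, j ≠ i → J v i - ψ i < J v j - ψ j}

/-- The points at which the minimum defining the `c`-transform is attained at several indices. -/
def tieSet (J : D → ι → ℝ) (ψ : ι → ℝ) : Set D :=
  {v | ∃ j k, j ≠ k ∧ J v j - ψ j = cTransform J ψ v ∧ J v k - ψ k = cTransform J ψ v}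

variable {J : D → ι → ℝ} {ψ : ι → ℝ} {v : D}

theorem eq_of_mem_laguerreCell {i k : ι} (hi : v ∈ laguerreCell J ψ i)
    (hk : v ∈ laguerreCell J ψ k) : i = k := by
  by_contra hne
  exact lt_asymm (hi k (Ne.symm hne)) (hk i hne)

theorem exists_mem_laguerreCell_of_notMem_tieSet [Finite ι] [Nonempty ι] (hv : v ∉ tieSet J ψ) :
    ∃ k, v ∈ laguerreCell J ψ k := by
  obtain ⟨k, hk⟩ := exists_eq_ciInf_of_finite (f := fun i ↦ J v i - ψ i)
  refine ⟨k, fun j hj ↦ lt_of_le_of_ne (hk.trans_le (Finite.ciInf_le _ j)) fun hjk ↦ hv ?_⟩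
  exact ⟨j, k, hj, hjk.symm.trans hk, hk⟩

theorem nullMeasurableSet_laguerreCell [Countable ι] [MeasurableSpace D] {μ : Measure D}
    (hJ : ∀ i, AEMeasurable (fun v ↦ J v i) μ) (ψ : ι → ℝ) (i : ι) :
    NullMeasurableSet (laguerreCell J ψ i) μ := by
  simp only [laguerreCell, Set.ofPred_forall]
  exact .iInter fun j ↦ .iInter fun _ ↦
    nullMeasurableSet_lt ((hJ i).sub_const (ψ i)) ((hJ j).sub_const (ψ j))

theorem lipschitzWith_cTransform [Fintype ι] [Nonempty ι] (J : D → ι → ℝ) (v : D) :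
    LipschitzWith 1 (fun ψ ↦ cTransform J ψ v) := by
  refine lipschitzWith_iInf fun i ↦ LipschitzWith.mk_one fun ψ φ ↦ ?_
  rw [dist_sub_left]
  exact dist_le_pi_dist ψ φ i

theorem integrable_cTransform [Finite ι] [Nonempty ι] [MeasurableSpace D] {μ : Measure D}
    [IsFiniteMeasure μ] (hJ : ∀ i, Integrable (fun v ↦ J v i) μ) (ψ : ι → ℝ) :
    Integrable (cTransform J ψ) μ :=
  integrable_iInf fun i ↦ (hJ i).sub (integrable_const (ψ i))

theorem hasFDerivAt_cTransform_of_mem_laguerreCell [Finite ι] {k : ι}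
    (hv : v ∈ laguerreCell J ψ k) :
    HasFDerivAt (fun φ ↦ cTransform J φ v) (-proj k : (ι → ℝ) →L[ℝ] ℝ) ψ := by
  have := Fintype.ofFinite ι
  have locally_affine : (fun φ ↦ cTransform J φ v) =ᶠ[𝓝 ψ] fun φ ↦ J v k - φ k :=
    iInf_eventuallyEq_of_forall_lt (f := fun i (φ : ι → ℝ) ↦ J v i - φ i)
      (fun i ↦ continuousAt_const.sub (continuousAt_apply i ψ)) hv
  exact ((hasFDerivAt_apply k ψ).const_sub (J v k)).congr_of_eventuallyEq locally_affine

end CTransform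

section DualObjective

variable {D ι : Type*} [Fintype ι] {J : D → ι → ℝ} {ψ : ι → ℝ}

/-- The derivative of `φ ↦ cTransform J φ v` at `ψ`, extended by `0` to the points `v` outside all
Laguerre cells. -/
noncomputable def cTransformFDeriv (J : D → ι → ℝ) (ψ : ι → ℝ) (v : D) : (ι → ℝ) →L[ℝ] ℝ :=
  ∑ i, (laguerreCell J ψ i).indicator (fun _ ↦ -proj i) v

theorem cTransformFDeriv_of_mem_laguerreCell {v : D} {k : ι} (hv : v ∈ laguerreCell J ψ k) :
    cTransformFDeriv J ψ v = -proj k := by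
  rw [cTransformFDeriv, Fintype.sum_eq_single k, Set.indicator_of_mem hv]
  exact fun i hik ↦ Set.indicator_of_notMem (fun hi ↦ hik (eq_of_mem_laguerreCell hi hv)) _

variable [MeasurableSpace D] {μ : Measure D}

theorem aestronglyMeasurable_cTransformFDeriv (hJ : ∀ i, AEMeasurable (fun v ↦ J v i) μ)
    (ψ : ι → ℝ) : AEStronglyMeasurable (cTransformFDeriv J ψ) μ := by
  unfold cTransformFDeriv
  exact Finset.aestronglyMeasurable_fun_sum _ fun i _ ↦
    aestronglyMeasurable_const.indicator₀ (nullMeasurableSet_laguerreCell hJ ψ i)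

variable [IsFiniteMeasure μ]

theorem integral_cTransformFDeriv (hJ : ∀ i, AEMeasurable (fun v ↦ J v i) μ) (ψ : ι → ℝ) :
    ∫ v, cTransformFDeriv J ψ v ∂μ =
      -∑ i, μ.real (laguerreCell J ψ i) • (proj i : (ι → ℝ) →L[ℝ] ℝ) := by
  simp only [cTransformFDeriv]
  have hcell := nullMeasurableSet_laguerreCell hJ ψ
  rw [integral_finsetSum _ fun i _ ↦ (integrable_const _).indicator₀ (hcell i)]
  simp [integral_indicator₀ (hcell _)]

theorem hasFDerivAt_integral_cTransform [Nonempty ι] (hJ : ∀ i, Integrable (fun v ↦ J v i) μ)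
    (hties : μ (tieSet J ψ) = 0) :
    HasFDerivAt (fun φ ↦ ∫ v, cTransform J φ v ∂μ)
      (-∑ i, μ.real (laguerreCell J ψ i) • (proj i : (ι → ℝ) →L[ℝ] ℝ)) ψ := by
  have hJ_meas i : AEMeasurable (fun v ↦ J v i) μ := (hJ i).aemeasurable
  have hderiv : ∀ᵐ v ∂μ, HasFDerivAt (fun φ ↦ cTransform J φ v) (cTransformFDeriv J ψ v) ψ := by
    filter_upwards [measure_eq_zero_iff_ae_notMem.1 hties] with v hv
    obtain ⟨k, hk⟩ := exists_mem_laguerreCell_of_notMem_tieSet hv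
    rw [cTransformFDeriv_of_mem_laguerreCell hk]
    exact hasFDerivAt_cTransform_of_mem_laguerreCell hk
  rw [← integral_cTransformFDeriv hJ_meas]
  have hlip (v : D) :
      LipschitzOnWith (Real.nnabs 1) (fun φ ↦ cTransform J φ v) Set.univ := by
    simpa using (lipschitzWith_cTransform J v).lipschitzOnWith (s := Set.univ)
  exact (hasFDerivAt_integral_of_dominated_loc_of_lip (𝕜 := ℝ) (bound := fun _ ↦ 1) univ_mem
    (Eventually.of_forall fun φ ↦ (integrable_cTransform hJ φ).aestronglyMeasurable)
    (integrable_cTransform hJ ψ) (aestronglyMeasurable_cTransformFDeriv hJ_meas ψ)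
    (Eventually.of_forall hlip) (integrable_const 1) hderiv).2

/-- The dual objective `F` of semi-discrete optimal transport, for the cost `J`, the source
measure `μ` and the target weights `ω`. -/
noncomputable def dualObjective (μ : Measure D) (J : D → ι → ℝ) (ω ψ : ι → ℝ) : ℝ :=
  ∑ i, ψ i * ω i + ∫ v, cTransform J ψ v ∂μ

theorem dual_objective_deriv_general [Nonempty ι] (hJ : ∀ i, Integrable (fun v ↦ J v i) μ)
    (ω : ι → ℝ) (hties : μ (tieSet J ψ) = 0) :
    HasFDerivAt (dualObjective μ J ω)
      (∑ i, (ω i - μ.real (laguerreCell J ψ i)) • (proj i : (ι → ℝ) →L[ℝ] ℝ)) ψ := by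
  have hlin : HasFDerivAt (fun φ : ι → ℝ ↦ ∑ i, φ i * ω i)
      (∑ i, ω i • (proj i : (ι → ℝ) →L[ℝ] ℝ)) ψ :=
    .fun_sum fun i _ ↦ (hasFDerivAt_apply i ψ).mul_const (ω i)
  refine (hlin.add (hasFDerivAt_integral_cTransform hJ hties)).congr_fderiv ?_
  ext x
  simp [sub_eq_add_neg, add_mul, Finset.sum_add_distrib]

end DualObjective

/-- Derivative of the dual objective in the direction of the `i`-th standard basis
vector: if ties in the minimum defining the c-transform occur only on a μ-null set,
then `t ↦ F (ψ + t • e_i)` is differentiable at `0` with derivative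
`ω i - μ(D_i)` where `D_i` is the strict-minimum cell of index `i`. -/
theorem dual_objective_deriv {D : Type*} [MeasurableSpace D]
    (μ : Measure D) [IsFiniteMeasure μ] (M : ℕ) (hM : 0 < M)
    (J : D → Fin M → ℝ) (hJint : ∀ i, Integrable (fun v => J v i) μ)
    (hJmeas : ∀ i, Measurable (fun v => J v i))
    (ω : Fin M → ℝ) (F : (Fin M → ℝ) → ℝ)
    (hF : ∀ ψ : Fin M → ℝ,
      F ψ = ∑ i, ψ i * ω i + ∫ v, (⨅ i, (J v i - ψ i)) ∂μ)
    (ψ : Fin M → ℝ) (i : Fin M) (Di : Set D)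
    (hDi : Di = {v | ∀ j, j ≠ i → J v i - ψ i < J v j - ψ j})
    (hties : μ {v | ∃ j k, j ≠ k ∧ J v j - ψ j = (⨅ l, (J v l - ψ l)) ∧
        J v k - ψ k = (⨅ l, (J v l - ψ l))} = 0) :
    HasDerivAt (fun t : ℝ => F (ψ + t • (Pi.single i 1 : Fin M → ℝ)))
      (ω i - (μ Di).toReal) 0 := by
  obtain rfl : F = dualObjective μ J ω := funext hF
  subst hDi
  have : Nonempty (Fin M) := ⟨i⟩
  simpa [HasLineDerivAt, Pi.single_apply, laguerreCell, Measure.real] using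
    (dual_objective_deriv_general hJint ω hties).hasLineDerivAt (Pi.single i 1)
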